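/- Let L ≥ 1. With Y_π = ∏_{j=1}^{L} exp(−iπSʸ_j), Y'_π = ∏_{j=1}^{L} exp(−i(π/2)Sʸ_j), and Z'_π = ∏_{j=1}^{L} exp(−i(π/2)σᶻ_j), the operator identity Y'_π Z'_π = Y_π Z'_π Y'_π holds on (ℂ³)^{⊗L}. -/

import Mathlib

noncomputable section
open Complex Matrix

/-- The Hilbert space operators of the `L`-site spin-1 chain: matrices on `(ℂ³)^{⊗L}`,
with the tensor factors indexed by sites and the single-site ordered basis `(|+⟩,|0⟩,|−⟩)`. -/
abbrev Op (L : ℕ) : Type := Matrix (Fin L → Fin 3) (Fin L → Fin 3) ℂ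

/-- The spin-1 matrix `Sˣ`. -/
def Sx : Matrix (Fin 3) (Fin 3) ℂ :=
  ((Real.sqrt 2 : ℝ) : ℂ)⁻¹ • !![0, 1, 0; 1, 0, 1; 0, 1, 0]

/-- The spin-1 matrix `Sʸ`. -/
def Sy : Matrix (Fin 3) (Fin 3) ℂ :=
  ((Real.sqrt 2 : ℝ) : ℂ)⁻¹ • !![0, -I, 0; I, 0, -I; 0, I, 0]

/-- The spin-1 matrix `Sᶻ = diag(1,0,−1)`. -/
def Sz : Matrix (Fin 3) (Fin 3) ℂ := !![1, 0, 0; 0, 0, 0; 0, 0, -1]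

/-- `site A j` is the one-site operator `A` acting on site `j` and identity elsewhere. -/
def site {L : ℕ} (A : Matrix (Fin 3) (Fin 3) ℂ) (j : Fin L) : Op L :=
  Matrix.of fun f g => ∏ k : Fin L, if k = j then A (f k) (g k) else (if f k = g k then 1 else 0)

/-- One factor `exp(iπ Sᶻ_u Sˣ_v)` of the Kennedy–Tasaki transformation. -/
def ktFactor {L : ℕ} (u v : Fin L) : Op L :=
  NormedSpace.exp (((Real.pi : ℂ) * I) • (site Sz u * site Sx v))

/-- The Kennedy–Tasaki transformation `U_KT = ∏_{1 ≤ u < v ≤ L} exp(iπ Sᶻ_u Sˣ_v)`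
(the factors pairwise commute, so the ordering is immaterial). -/
def UKT (L : ℕ) : Op L :=
  ((List.finRange L).map fun u =>
    ((List.finRange L).map fun v => if u < v then ktFactor u v else 1).prod).prod

/-- The p-wave basis vector `|↑⟩ = (|+⟩ − |−⟩)/√2`. -/
def up : Fin 3 → ℂ := ![((Real.sqrt 2 : ℝ) : ℂ)⁻¹, 0, -((Real.sqrt 2 : ℝ) : ℂ)⁻¹]

/-- The p-wave basis vector `|↓⟩ = |0⟩`. -/
def down : Fin 3 → ℂ := ![0, 1, 0]

/-- The p-wave basis vector `|h⟩ = (|+⟩ + |−⟩)/√2`. -/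
def hole : Fin 3 → ℂ := ![((Real.sqrt 2 : ℝ) : ℂ)⁻¹, 0, ((Real.sqrt 2 : ℝ) : ℂ)⁻¹]

/-- The rank-one operator `|a⟩⟨b|`. -/
def ketbra (a b : Fin 3 → ℂ) : Matrix (Fin 3) (Fin 3) ℂ := Matrix.vecMulVec a (star b)

/-- `σˣ = |↑⟩⟨↓| + |↓⟩⟨↑|` (annihilating `|h⟩`). -/
def sigx : Matrix (Fin 3) (Fin 3) ℂ := ketbra up down + ketbra down up

/-- `σʸ = −i|↑⟩⟨↓| + i|↓⟩⟨↑|` (annihilating `|h⟩`). -/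
def sigy : Matrix (Fin 3) (Fin 3) ℂ := (-I) • ketbra up down + I • ketbra down up

/-- `σᶻ = |↑⟩⟨↑| − |↓⟩⟨↓|` (annihilating `|h⟩`). -/
def sigz : Matrix (Fin 3) (Fin 3) ℂ := ketbra up up - ketbra down down

/-- `n = |↑⟩⟨↑| + |↓⟩⟨↓|` (annihilating `|h⟩`). -/
def nMat : Matrix (Fin 3) (Fin 3) ℂ := ketbra up up + ketbra down down

/-- `h = |h⟩⟨h|`. -/
def hMat : Matrix (Fin 3) (Fin 3) ℂ := ketbra hole hole

/-- `P = ⊗_{j=1}^L n_j`, the orthogonal projection onto the hole-free subspace. -/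
def Pproj (L : ℕ) : Op L := Matrix.of fun f g => ∏ k : Fin L, nMat (f k) (g k)

/-- The Heisenberg coupling `S_j · S_k`. -/
def heis {L : ℕ} (j k : Fin L) : Op L :=
  site Sx j * site Sx k + site Sy j * site Sy k + site Sz j * site Sz k

/-- The bilinear-biquadratic Hamiltonian
`H_BLBQ(θ) = Σ_{j=1}^{L−1} [cosθ (S_j·S_{j+1}) + sinθ (S_j·S_{j+1})²]`. -/
def HBLBQ (L : ℕ) (θ : ℝ) : Op L :=
  ∑ j : Fin L, if h : (j : ℕ) + 1 < L then
    ((Real.cos θ : ℝ) : ℂ) • heis j ⟨(j : ℕ) + 1, h⟩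
      + ((Real.sin θ : ℝ) : ℂ) • (heis j ⟨(j : ℕ) + 1, h⟩) ^ 2
  else 0

/-- The self-dual Hamiltonian `H_SD(θ) = H_BLBQ(θ) + U_KT H_BLBQ(θ) U_KT`. -/
def HSD (L : ℕ) (θ : ℝ) : Op L := HBLBQ L θ + UKT L * HBLBQ L θ * UKT L

/-- The spin-1/2 XXZ Hamiltonian written in the p-wave basis:
`H_XXZ(θ) = (cosθ−sinθ) Σ_j (−σˣ_jσˣ_{j+1} + σʸ_jσʸ_{j+1}) + sinθ Σ_j σᶻ_jσᶻ_{j+1}`. -/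
def HXXZ (L : ℕ) (θ : ℝ) : Op L :=
  ((Real.cos θ - Real.sin θ : ℝ) : ℂ) •
    (∑ j : Fin L, if h : (j : ℕ) + 1 < L then
      -(site sigx j * site sigx ⟨(j : ℕ) + 1, h⟩) + site sigy j * site sigy ⟨(j : ℕ) + 1, h⟩
    else 0)
  + ((Real.sin θ : ℝ) : ℂ) •
    (∑ j : Fin L, if h : (j : ℕ) + 1 < L then
      site sigz j * site sigz ⟨(j : ℕ) + 1, h⟩
    else 0)

/-- The global product `∏_{j=1}^L exp(c • A_j)` of commuting single-site exponentials. -/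
def globalProd (L : ℕ) (A : Matrix (Fin 3) (Fin 3) ℂ) (c : ℂ) : Op L :=
  ((List.finRange L).map fun j => NormedSpace.exp (c • site A j)).prod

/-- The symmetry flux `F^y_j = exp(−iπ Σ_{k<j} Sʸ_k) · Sʸ_j`. -/
def fluxY (L : ℕ) (j : Fin L) : Op L :=
  NormedSpace.exp ((-((Real.pi : ℂ) * I)) •
    ∑ k : Fin L, if (k : ℕ) < (j : ℕ) then site Sy k else 0) * site Sy j


theorem aux_gen {R : Type*} [NormedRing R] [NormedAlgebra ℂ R] [FiniteDimensional ℂ R]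
    (X A A' : R) (h : X * A = A' * X) : X * NormedSpace.exp A = NormedSpace.exp A' * X := by
  have : CompleteSpace R := FiniteDimensional.complete ℂ _
  let : NormedAlgebra ℚ R := NormedAlgebra.restrictScalars ℚ ℂ R
  exact SemiconjBy.exp_right (show SemiconjBy X A A' from h)

theorem aux_semiconj {n : Type*} [Fintype n] [DecidableEq n] (X A A' : Matrix n n ℂ)
    (h : X * A = A' * X) : X * NormedSpace.exp A = NormedSpace.exp A' * X := by
  have fd : FiniteDimensional ℂ (Matrix n n ℂ) := inferInstance
  with_unfolding_all
    exact (@aux_gen (Matrix n n ℂ) Matrix.linftyOpNormedRing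
      Matrix.linftyOpNormedAlgebra fd X A A' h)

theorem aux_eig {n : Type*} [Fintype n] [DecidableEq n] (X A : Matrix n n ℂ) (c : ℂ)
    (h : X * A = c • X) : X * NormedSpace.exp A = Complex.exp c • X := by
  have := aux_semiconj X A (algebraMap ℂ _ c) (by rw [h, Algebra.smul_def])
  rw [this, Algebra.smul_def]
  congr 1
  rw [Matrix.algebraMap_eq_diagonal, Matrix.algebraMap_eq_diagonal, Matrix.exp_diagonal]
  congr 1
  funext i
  rw [Pi.coe_exp]
  simp [Complex.exp_eq_exp_ℂ]

/-- tensor product of single-site operators -/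
def tens {L : ℕ} (M : Fin L → Matrix (Fin 3) (Fin 3) ℂ) : Op L :=
  Matrix.of fun f g => ∏ k : Fin L, M k (f k) (g k)

theorem tens_mul {L : ℕ} (M N : Fin L → Matrix (Fin 3) (Fin 3) ℂ) :
    tens M * tens N = tens (M * N) := by
  ext f g
  simp only [tens, Matrix.mul_apply, Matrix.of_apply, Pi.mul_apply, Finset.prod_univ_sum,
    Fintype.piFinset_univ, Finset.prod_mul_distrib]

theorem site_eq {L : ℕ} (A : Matrix (Fin 3) (Fin 3) ℂ) (j : Fin L) :
    site A j = tens (Pi.mulSingle j A) := by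
  ext f g
  simp only [site, tens, Matrix.of_apply]
  refine Finset.prod_congr rfl fun k _ => ?_
  by_cases h : k = j
  · subst h; simp
  · simp [h, Matrix.one_apply]

theorem site_mul {L : ℕ} (A B : Matrix (Fin 3) (Fin 3) ℂ) (j : Fin L) :
    site A j * site B j = site (A * B) j := by
  rw [site_eq, site_eq, site_eq, tens_mul, Pi.mulSingle_mul]

theorem site_comm {L : ℕ} (A B : Matrix (Fin 3) (Fin 3) ℂ) {j k : Fin L} (h : j ≠ k) :
    Commute (site A j) (site B k) := by
  unfold Commute SemiconjBy
  rw [site_eq, site_eq, tens_mul, tens_mul]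
  congr 1
  exact Pi.mulSingle_commute (f := fun _ => Matrix (Fin 3) (Fin 3) ℂ) h A B

theorem site_neg {L : ℕ} (A : Matrix (Fin 3) (Fin 3) ℂ) (j : Fin L) :
    site (-A) j = -site A j := by
  ext f g
  simp only [site, Matrix.of_apply, Matrix.neg_apply]
  rw [← Finset.mul_prod_erase _ _ (Finset.mem_univ j),
    ← Finset.mul_prod_erase _ _ (Finset.mem_univ j)]
  simp only [if_true, neg_mul]
  congr 2
  refine Finset.prod_congr rfl fun k hk => ?_
  simp [Finset.ne_of_mem_erase hk]

theorem sqrt_aux : ((Real.sqrt 2 : ℝ) : ℂ)⁻¹ * ((Real.sqrt 2 : ℝ) : ℂ)⁻¹ = 1 / 2 := by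
  rw [← mul_inv, ← Complex.ofReal_mul, Real.mul_self_sqrt (by norm_num)]
  norm_num

theorem sigz_eq : sigz = !![1/2, 0, -1/2; 0, -1, 0; -1/2, 0, 1/2] := by
  have h := sqrt_aux
  ext i j
  fin_cases i <;> fin_cases j <;>
    simp only [sigz, ketbra, Matrix.sub_apply, Matrix.vecMulVec_apply, Pi.star_apply] <;>
    simp [up, down, h, neg_div]

theorem anti : sigz * Sy = -(Sy * sigz) := by
  rw [sigz_eq, Sy]
  ext i j
  fin_cases i <;> fin_cases j <;>
    simp [Matrix.mul_apply, Fin.sum_univ_three] <;> ring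

theorem Sy_sq : Sy * (sigz * sigz) = Sy := by
  rw [sigz_eq, Sy]
  ext i j
  fin_cases i <;> fin_cases j <;>
    simp [Matrix.mul_apply, Fin.sum_univ_three] <;> ring

theorem key_abs {n : Type*} [Fintype n] [DecidableEq n] (Z B : Matrix n n ℂ)
    (h1 : Z * B = -(B * Z)) (h2 : B * (Z * Z) = B) :
    NormedSpace.exp ((-(((Real.pi / 2 : ℝ) : ℂ) * I)) • Z) * B =
      -(B * NormedSpace.exp ((-(((Real.pi / 2 : ℝ) : ℂ) * I)) • Z)) := by
  set c : ℂ := -(((Real.pi / 2 : ℝ) : ℂ) * I) with hc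
  have e1 : B * NormedSpace.exp (-(c • Z)) = NormedSpace.exp (c • Z) * B := by
    apply aux_semiconj
    rw [smul_mul_assoc, h1, mul_neg, mul_smul_comm, smul_neg]
  have e2 : NormedSpace.exp (-(c • Z)) =
      NormedSpace.exp (((Real.pi : ℂ) * I) • Z) * NormedSpace.exp (c • Z) := by
    rw [← Matrix.exp_add_of_commute]
    · congr 1
      rw [← add_smul, ← neg_smul]
      congr 1
      rw [hc]; push_cast; ring
    · exact ((Commute.refl Z).smul_left _).smul_right _
  have p := aux_eig (B + B * Z) (((Real.pi : ℂ) * I) • Z) ((Real.pi : ℂ) * I) (by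
    rw [mul_smul_comm, add_mul, mul_assoc, h2, add_comm])
  have m := aux_eig (B - B * Z) (((Real.pi : ℂ) * I) • Z) (-((Real.pi : ℂ) * I)) (by
    rw [mul_smul_comm, sub_mul, mul_assoc, h2, neg_smul, ← smul_neg, neg_sub])
  rw [Complex.exp_pi_mul_I] at p
  rw [Complex.exp_neg, Complex.exp_pi_mul_I] at m
  have e3 : B * NormedSpace.exp (((Real.pi : ℂ) * I) • Z) = -B := by
    have hB : B = (1 / 2 : ℂ) • ((B + B * Z) + (B - B * Z)) := by module
    conv_lhs => rw [hB, smul_mul_assoc, add_mul, p, m]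
    norm_num
    module
  rw [← e1, e2, ← mul_assoc, e3, neg_mul]

theorem exp_list {n : Type*} [Fintype n] [DecidableEq n] {ι : Type*} (f : ι → Matrix n n ℂ)
    (hf : ∀ i j, Commute (f i) (f j)) (l : List ι) :
    (l.map fun j => NormedSpace.exp (f j)).prod = NormedSpace.exp (l.map f).sum := by
  induction l with
  | nil => simp
  | cons a l ih =>
    rw [List.map_cons, List.prod_cons, ih, List.map_cons, List.sum_cons,
      Matrix.exp_add_of_commute]
    apply Commute.list_sum_right
    intro x hx
    obtain ⟨b, _, rfl⟩ := List.mem_map.1 hx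
    exact hf a b

theorem prod_anti {R ι : Type*} [Ring R] (U B : ι → R)
    (h1 : ∀ i, U i * B i = -(B i * U i)) (h2 : ∀ i j, i ≠ j → Commute (U i) (B j))
    (l : List ι) (hl : l.Nodup) (k : ι) :
    (k ∈ l → (l.map U).prod * B k = -(B k * (l.map U).prod)) ∧
      (k ∉ l → (l.map U).prod * B k = B k * (l.map U).prod) := by
  induction l with
  | nil => simp
  | cons a l ih =>
    obtain ⟨ha, hl⟩ := List.nodup_cons.1 hl
    obtain ⟨ih1, ih2⟩ := ih hl
    rw [List.map_cons, List.prod_cons]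
    by_cases hk : a = k
    · subst hk
      refine ⟨fun _ => ?_, fun h => absurd List.mem_cons_self h⟩
      rw [mul_assoc, ih2 ha, ← mul_assoc, h1, neg_mul, mul_assoc]
    · have hc : U a * B k = B k * U a := h2 a k hk
      refine ⟨fun h => ?_, fun h => ?_⟩
      · have : k ∈ l := by
          rcases List.mem_cons.1 h with h | h
          · exact absurd h.symm hk
          · exact h
        rw [mul_assoc, ih1 this, mul_neg, ← mul_assoc, hc, mul_assoc]
      · have : k ∉ l := fun h' => h (List.mem_cons_of_mem _ h')
        rw [mul_assoc, ih2 this, ← mul_assoc, hc, mul_assoc]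

theorem site_comm_self {L : ℕ} (A : Matrix (Fin 3) (Fin 3) ℂ) (i j : Fin L) :
    Commute (site A i) (site A j) := by
  by_cases h : i = j
  · subst h; exact Commute.refl _
  · exact site_comm A A h

theorem globalProd_eq (L : ℕ) (A : Matrix (Fin 3) (Fin 3) ℂ) (c : ℂ) :
    globalProd L A c = NormedSpace.exp (c • ((List.finRange L).map fun j => site A j).sum) := by
  unfold globalProd
  rw [exp_list (fun j => c • site A j)
    (fun i j => ((site_comm_self A i j).smul_left _).smul_right _), List.smul_sum, List.map_map]
  rfl

theorem V_anti (L : ℕ) :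
    globalProd L sigz (-(((Real.pi / 2 : ℝ) : ℂ) * I)) *
      ((List.finRange L).map fun j => site Sy j).sum =
    -(((List.finRange L).map fun j => site Sy j).sum *
      globalProd L sigz (-(((Real.pi / 2 : ℝ) : ℂ) * I))) := by
  have key : ∀ k : Fin L, globalProd L sigz (-(((Real.pi / 2 : ℝ) : ℂ) * I)) * site Sy k =
      -(site Sy k * globalProd L sigz (-(((Real.pi / 2 : ℝ) : ℂ) * I))) := by
    intro k
    refine (prod_anti (fun j : Fin L => NormedSpace.exp
      ((-(((Real.pi / 2 : ℝ) : ℂ) * I)) • site sigz j)) (fun j => site Sy j) ?_ ?_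
      (List.finRange L) (List.nodup_finRange L) k).1 (List.mem_finRange k)
    · intro i
      apply key_abs
      · rw [site_mul, site_mul, anti, site_neg]
      · rw [site_mul, site_mul, Sy_sq]
    · intro i j hij
      exact (aux_semiconj _ _ _ (((site_comm sigz Sy hij).smul_left _).symm)).symm
  generalize globalProd L sigz (-(((Real.pi / 2 : ℝ) : ℂ) * I)) = V at key
  induction List.finRange L with
  | nil => simp
  | cons a l ih =>
    rw [List.map_cons, List.sum_cons, mul_add, ih, key, add_mul, neg_add]

/-- With `Y_π = ∏_j exp(−iπSʸ_j)`, `Y'_π = ∏_j exp(−i(π/2)Sʸ_j)`, and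
`Z'_π = ∏_j exp(−i(π/2)σᶻ_j)`, the operator identity `Y'_π Z'_π = Y_π Z'_π Y'_π` holds on
`(ℂ³)^{⊗L}`. -/
theorem Yprime_Zprime_identity (L : ℕ) (hL : 1 ≤ L) :
    globalProd L Sy (-(((Real.pi / 2 : ℝ) : ℂ) * I)) *
        globalProd L sigz (-(((Real.pi / 2 : ℝ) : ℂ) * I)) =
      globalProd L Sy (-((Real.pi : ℂ) * I)) *
        globalProd L sigz (-(((Real.pi / 2 : ℝ) : ℂ) * I)) *
        globalProd L Sy (-(((Real.pi / 2 : ℝ) : ℂ) * I)) := by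
  have hV := V_anti L
  rw [globalProd_eq L Sy, globalProd_eq L Sy]
  generalize globalProd L sigz (-(((Real.pi / 2 : ℝ) : ℂ) * I)) = V at *
  generalize ((List.finRange L).map fun j => site Sy j).sum = S at *
  rw [mul_assoc, aux_semiconj V _ ((((Real.pi / 2 : ℝ) : ℂ) * I) • S), ← mul_assoc,
    ← Matrix.exp_add_of_commute]
  · congr 2
    rw [← add_smul]
    congr 1
    push_cast; ring
  · exact ((Commute.refl S).smul_left _).smul_right _
  · rw [mul_smul_comm, hV, smul_mul_assoc, neg_smul, smul_neg, neg_neg]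

end
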